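/- Let 1 ≤ m ≤ n with m + n ≥ 3, and let K_{m,n} be the complete bipartite graph with parts of sizes m and n (equivalently, the join of the empty graphs N_m and N_n). Then there is a Marcello step from K_{m,n} to the complete graph on its m + n vertices (i.e., ϖ(N_m + N_n) = 1) if and only if n ≤ 2m + 1. -/

import Mathlib

open SimpleGraph

attribute [local instance] Classical.propDecidable

/-- The degree of a vertex. -/
noncomputable def mdeg {V : Type*} (G : SimpleGraph V) (v : V) : ℕ :=
  (G.neighborSet v).ncard

/-- `G'` is obtained from `G` by a Marcello step. -/
def MarcelloStep {V : Type*} [Fintype V] (G G' : SimpleGraph V) : Prop :=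
  G ≤ G' ∧ ∃ f : Sym2 V → V,
    (∀ e ∈ G'.edgeSet \ G.edgeSet, f e ∈ e) ∧
    (∀ v : V, (∃ e ∈ G'.edgeSet \ G.edgeSet, f e = v) →
        0 < mdeg G v ∧ mdeg G v < Fintype.card V - 1) ∧
    (∀ v : V, ((G'.edgeSet \ G.edgeSet) ∩ {e | f e = v}).ncard ≤ mdeg G v)

/-- There is a Marcello chain of length `k` from `G` to `H`. -/
def MarcelloChain {V : Type*} [Fintype V] (G H : SimpleGraph V) (k : ℕ) : Prop :=
  ∃ c : ℕ → SimpleGraph V, c 0 = G ∧ c k = H ∧ ∀ i < k, MarcelloStep (c i) (c (i + 1))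

/-- The Marcello number `ϖ(G)`. -/
noncomputable def marcelloNumber {V : Type*} [Fintype V] (G : SimpleGraph V) : ℕ :=
  sInf {k | MarcelloChain G (⊤ : SimpleGraph V) k}

/-- The sum of degrees over vertices `v` with `0 < deg v < n - 1`. -/
noncomputable def marcelloSum {V : Type*} [Fintype V] (G : SimpleGraph V) : ℕ :=
  ∑ v ∈ Finset.univ.filter
      (fun v => 0 < mdeg G v ∧ mdeg G v < Fintype.card V - 1), mdeg G v

lemma aux_T (k d : ℕ) (h : k ≤ 2 * d + 1) : ∃ T : Fin k → Finset (Fin k),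
    (∀ i, (T i).card ≤ d) ∧ ∀ i j, i ≠ j → j ∈ T i ∨ i ∈ T j := by
  refine ⟨fun i => (Finset.Icc 1 d).image (fun x =>
    (⟨(if i.1 + x < k then i.1 + x else i.1 + x - (2 * d + 1)) % k,
      Nat.mod_lt _ (by have := i.2; omega)⟩ : Fin k)), ?_, ?_⟩
  · intro i
    exact Finset.card_image_le.trans (by simp)
  · have key : ∀ i j : Fin k, i < j → j ∈ (Finset.Icc 1 d).image (fun x =>
        (⟨(if i.1 + x < k then i.1 + x else i.1 + x - (2 * d + 1)) % k,
        Nat.mod_lt _ (by have := i.2; omega)⟩ : Fin k)) ∨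
        i ∈ (Finset.Icc 1 d).image (fun x =>
        (⟨(if j.1 + x < k then j.1 + x else j.1 + x - (2 * d + 1)) % k,
        Nat.mod_lt _ (by have := j.2; omega)⟩ : Fin k)) := by
      intro i j hij
      have hi := i.2
      have hj := j.2
      have hij' : i.1 < j.1 := hij
      by_cases hd : j.1 - i.1 ≤ d
      · left
        refine Finset.mem_image.2 ⟨j.1 - i.1, by simp; omega, ?_⟩
        apply Fin.ext
        have e : i.1 + (j.1 - i.1) = j.1 := by omega
        simp only [e, hj, if_true]
        exact Nat.mod_eq_of_lt hj
      · right
        refine Finset.mem_image.2 ⟨i.1 + (2 * d + 1) - j.1, by simp; omega, ?_⟩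
        apply Fin.ext
        have e : j.1 + (i.1 + (2 * d + 1) - j.1) = i.1 + (2 * d + 1) := by omega
        have e2 : ¬ (i.1 + (2 * d + 1) < k) := by omega
        simp only [e, e2, if_false, Nat.add_sub_cancel]
        exact Nat.mod_eq_of_lt hi
    intro i j hij
    rcases lt_or_gt_of_ne hij with h | h
    · exact key i j h
    · exact (key j i h).symm

lemma mdeg_inl (m n : ℕ) (i : Fin m) :
    mdeg (completeBipartiteGraph (Fin m) (Fin n)) (Sum.inl i) = n := by
  have : (completeBipartiteGraph (Fin m) (Fin n)).neighborSet (Sum.inl i)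
      = Sum.inr '' (Set.univ : Set (Fin n)) := by
    ext x; cases x <;> simp
  rw [mdeg, this, Set.ncard_image_of_injective _ Sum.inr_injective]
  simp [Set.ncard_univ]

lemma mdeg_inr (m n : ℕ) (i : Fin n) :
    mdeg (completeBipartiteGraph (Fin m) (Fin n)) (Sum.inr i) = m := by
  have : (completeBipartiteGraph (Fin m) (Fin n)).neighborSet (Sum.inr i)
      = Sum.inl '' (Set.univ : Set (Fin m)) := by
    ext x; cases x <;> simp
  rw [mdeg, this, Set.ncard_image_of_injective _ Sum.inl_injective]
  simp [Set.ncard_univ]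

/-- For `1 ≤ m ≤ n` with `m + n ≥ 3`, one Marcello step completes `K_{m,n}`
if and only if `n ≤ 2m + 1`. -/
theorem marcello_completeBipartite_iff (m n : ℕ) (hm : 1 ≤ m) (hmn : m ≤ n)
    (h3 : 3 ≤ m + n) :
    MarcelloStep (completeBipartiteGraph (Fin m) (Fin n))
        (⊤ : SimpleGraph (Fin m ⊕ Fin n)) ↔ n ≤ 2 * m + 1 := by
  constructor
  · rintro ⟨-, f, hf, -, hc⟩
    let S : Finset (Sym2 (Fin m ⊕ Fin n)) :=
      (⊤ : SimpleGraph (Fin n)).edgeFinset.image (Sym2.map Sum.inr)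
    have hS : S.card = n.choose 2 := by
      rw [Finset.card_image_of_injective _ (Sym2.map.injective Sum.inr_injective),
        SimpleGraph.card_edgeFinset_top_eq_card_choose_two, Fintype.card_fin]
    have hSm : ∀ e ∈ S, e ∈ (⊤ : SimpleGraph (Fin m ⊕ Fin n)).edgeSet \
        (completeBipartiteGraph (Fin m) (Fin n)).edgeSet ∧ ∀ v ∈ e, ∃ i, v = Sum.inr i := by
      intro e he
      obtain ⟨a, ha, rfl⟩ := Finset.mem_image.1 he
      induction a with | _ x y =>
      rw [SimpleGraph.mem_edgeFinset, SimpleGraph.mem_edgeSet, SimpleGraph.top_adj] at ha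
      refine ⟨⟨?_, ?_⟩, ?_⟩
      · simpa using ha
      · simp
      · intro v hv
        rw [Sym2.map_mk, Sym2.mem_iff] at hv
        rcases hv with h | h
        · exact ⟨x, h⟩
        · exact ⟨y, h⟩
    have hle := Finset.card_le_mul_card_image_of_maps_to (s := S)
      (t := Finset.univ.image (Sum.inr : Fin n → Fin m ⊕ Fin n)) (f := f)
      (fun e he => by
        obtain ⟨h1, h2⟩ := hSm e he
        obtain ⟨i, hi⟩ := h2 _ (hf e h1)
        simp [hi]) m
      (fun b hb => by
        obtain ⟨i, -, rfl⟩ := Finset.mem_image.1 hb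
        refine le_trans ?_ ((hc (Sum.inr i)).trans (mdeg_inr m n i).le)
        rw [← Set.ncard_coe_finset]
        refine Set.ncard_le_ncard ?_ (Set.toFinite _)
        intro e he
        simp only [Finset.coe_filter, Set.mem_setOf_eq] at he
        exact ⟨(hSm e he.1).1, he.2⟩)
    rw [hS, Finset.card_image_of_injective _ Sum.inr_injective, Finset.card_univ,
      Fintype.card_fin] at hle
    have h2 : n.choose 2 * 2 = n * (n - 1) := by
      rw [Nat.choose_two_right]
      exact Nat.div_mul_cancel (Nat.even_mul_pred_self n).two_dvd
    have h4 : n * (n - 1) ≤ n * (2 * m) := by nlinarith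
    have := Nat.le_of_mul_le_mul_left h4 (by omega)
    omega
  · intro h
    obtain ⟨T, hT, hT'⟩ := aux_T n m h
    obtain ⟨U, hU, hU'⟩ := aux_T m n (by omega)
    let O : Fin m ⊕ Fin n → Finset (Sym2 (Fin m ⊕ Fin n)) := fun v => match v with
      | Sum.inl i => (U i).image (fun j => s(Sum.inl i, Sum.inl j))
      | Sum.inr i => (T i).image (fun j => s(Sum.inr i, Sum.inr j))
    have hex : ∀ e : Sym2 (Fin m ⊕ Fin n), ∃ v, e ∈ (⊤ : SimpleGraph (Fin m ⊕ Fin n)).edgeSet \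
        (completeBipartiteGraph (Fin m) (Fin n)).edgeSet → v ∈ e ∧ e ∈ O v := by
      intro e
      induction e with | _ x y =>
      by_cases hxy : s(x, y) ∈ (⊤ : SimpleGraph (Fin m ⊕ Fin n)).edgeSet \
        (completeBipartiteGraph (Fin m) (Fin n)).edgeSet
      swap
      · exact ⟨x, fun h => absurd h hxy⟩
      rcases x with x | x <;> rcases y with y | y
      · have hne : x ≠ y := by simpa using hxy.1
        rcases hU' x y hne with h | h
        · exact ⟨Sum.inl x, fun _ => ⟨by simp, Finset.mem_image.2 ⟨y, h, rfl⟩⟩⟩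
        · exact ⟨Sum.inl y, fun _ => ⟨by simp, Finset.mem_image.2 ⟨x, h, Sym2.eq_swap⟩⟩⟩
      · exact absurd (by simp) hxy.2
      · exact absurd (by simp) hxy.2
      · have hne : x ≠ y := by simpa using hxy.1
        rcases hT' x y hne with h | h
        · exact ⟨Sum.inr x, fun _ => ⟨by simp, Finset.mem_image.2 ⟨y, h, rfl⟩⟩⟩
        · exact ⟨Sum.inr y, fun _ => ⟨by simp, Finset.mem_image.2 ⟨x, h, Sym2.eq_swap⟩⟩⟩
    choose f hf using hex
    refine ⟨le_top, f, fun e he => (hf e he).1, ?_, ?_⟩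
    · rintro v ⟨e, he, rfl⟩
      have hO := (hf e he).2
      rcases hv : f e with i | i
      · rw [hv] at hO
        obtain ⟨j, -, rfl⟩ := Finset.mem_image.1 hO
        have hne : i ≠ j := by simpa using he.1
        have hi := i.2
        have hj := j.2
        have : i.1 ≠ j.1 := fun h => hne (Fin.ext h)
        rw [mdeg_inl, Fintype.card_sum, Fintype.card_fin, Fintype.card_fin]
        omega
      · rw [mdeg_inr, Fintype.card_sum, Fintype.card_fin, Fintype.card_fin]
        omega
    · intro v
      have hOc : (O v).card ≤ mdeg (completeBipartiteGraph (Fin m) (Fin n)) v := by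
        rcases v with i | i
        · rw [mdeg_inl]
          exact Finset.card_image_le.trans (hU i)
        · rw [mdeg_inr]
          exact Finset.card_image_le.trans (hT i)
      refine le_trans ?_ hOc
      rw [← Set.ncard_coe_finset]
      refine Set.ncard_le_ncard ?_ (Set.toFinite _)
      rintro e ⟨he, rfl⟩
      exact (hf e he).2
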